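/- arXiv:math/0612331 — 2 statements merged into one kernel-verified Lean document; each statement's English description precedes it below -/
import Mathlib

section
/- If G ∈ F₄(F₂, full house), then |V(G)| ≤ 8. Here the full house is the graph on vertex set {1,2,3,4,5} with edge set {12, 13, 23, 24, 25, 34, 35, 45}. -/
/-!
Over `ZMod 2` a matrix fitting `G` is determined by its diagonal. If its rank is at most `3` and it
has an invertible principal submatrix `M` on three vertices, then its entry at `(u, w)` is forced to
be `rᵤ M⁻¹ r_wᵀ`, where `rᵤ` and `r_w` are the rows of `u` and `w` on these three vertices. So such
a matrix exists exactly when no pair of vertices is in conflict, that is, has a forced entry that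
disagrees with the adjacency.

In a matrix of rank at most `3` fitting the full house, the principal submatrix on the vertices
`0, 1, 3` is invertible and is one of four matrices `M₀, …, M₃`. Hence `mr(G) ≥ 4` means that each
of the four has a conflict. Let `T` be a set of vertices which, together with the full house,
contains a conflict for each `Mₖ`. A vertex outside both could be deleted without lowering the
minimum rank below `4`, so there is none, and it remains to find such a `T` with at most three
elements.

The vertices outside the full house that are not in conflict with it for `Mₖ` are given by linear
equations on their rows. These equations are the same for `k = 1` and `k = 3`, and a vertex
satisfying them for `k = 0` and `k = 2` also satisfies them for `k = 1`. Hence a vertex violating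
them for `k = 1` serves three of the four matrices, and two more vertices serve the last one.
Otherwise, the key point is that `Mₖ⁻¹ - Mₗ⁻¹` has the form `ℓᵀℓ` for `(k, l) = (0, 1), (1, 3),
(2, 3)`, so that outside the full house the forced entries differ by `ℓ(rᵤ) ℓ(r_w)`. The equations
for `k` and `l` give `ℓ = 0` when `(k, l)` is `(0, 1)` or `(2, 3)`, so a conflict for `M₁` yields
one for `M₀`, and a conflict for `M₃` yields one for `M₂`. For `(1, 3)`, if `{v, w}` is in conflict
only for `M₁` and `{x, y}` only for `M₃`, then `ℓ = 1` on all four rows, so `{v, x}` is in conflict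
for one of the two, and three of the vertices suffice.
-/

open Matrix

/-- `A` is a symmetric matrix over `F` whose off-diagonal nonzero pattern is
given by the graph `G` (diagonal entries are unconstrained). -/
def IsGraphMatrix (F : Type*) [Field F] {V : Type*} (G : SimpleGraph V)
    (A : Matrix V V F) : Prop :=
  A.IsSymm ∧ ∀ i j : V, i ≠ j → (A i j ≠ 0 ↔ G.Adj i j)

/-- The minimum rank `mr(F, G)` of the graph `G` over the field `F`. -/
noncomputable def minRank (F : Type*) [Field F] {V : Type*} [Fintype V]
    (G : SimpleGraph V) : ℕ :=
  sInf {r : ℕ | ∃ A : Matrix V V F, IsGraphMatrix F G A ∧ A.rank = r}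

/-- The graph `G - v` obtained from `G` by deleting the vertex `v`. -/
def deleteVert {V : Type*} (G : SimpleGraph V) (v : V) : SimpleGraph {u : V // u ≠ v} :=
  SimpleGraph.comap Subtype.val G

/-- `G ∈ F_K(F, H)`: `G` contains `H` as an induced subgraph, `mr(F, G) ≥ K`, and for
some induced copy of `H` in `G` (an embedding `f : H ↪g G`), `mr(F, G - v) ≤ K - 1`
for every vertex `v` of `G` outside that copy. -/
def MemForbRel (F : Type*) [Field F] (K : ℕ) {VH VG : Type*} [Fintype VH] [Fintype VG]
    [DecidableEq VG] (H : SimpleGraph VH) (G : SimpleGraph VG) : Prop :=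
  K ≤ minRank F G ∧
    ∃ f : H ↪g G, ∀ v : VG, v ∉ Set.range f → minRank F (deleteVert G v) + 1 ≤ K

/-- The full house graph: vertices `{0, 1, 2, 3, 4}` with edges
`01, 02, 12, 13, 14, 23, 24, 34` (the graph `12, 13, 23, 24, 25, 34, 35, 45`
on `{1, …, 5}` in 1-indexed notation). -/
def fullHouse : SimpleGraph (Fin 5) :=
  SimpleGraph.fromEdgeSet {s(0,1), s(0,2), s(1,2), s(1,3), s(1,4), s(2,3), s(2,4), s(3,4)}

/-! ### Matrices of bounded rank -/

section Rank

variable {F : Type*} [Field F] {κ m n : Type*} [Fintype κ] [DecidableEq κ] [Fintype n]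

lemma det_submatrix_eq_zero_of_rank_lt {A : Matrix m n F} (hA : A.rank < Fintype.card κ)
    (r : κ → m) (c : κ → n) : (A.submatrix r c).det = 0 := by
  by_contra hdet
  have hle := rank_submatrix_le A r c
  rw [rank_of_det_ne_zero hdet] at hle
  exact hA.not_ge hle

lemma apply_eq_of_rank_le_card {A : Matrix m n F} (hA : A.rank ≤ Fintype.card κ) (r : κ → m)
    (c : κ → n) (hdet : IsUnit (A.submatrix r c).det) (u : m) (w : n) :
    A u w = (fun j => A u (c j)) ⬝ᵥ (A.submatrix r c)⁻¹ *ᵥ fun i => A (r i) w := by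
  let B : Matrix κ Unit F := replicateCol Unit fun i => A (r i) w
  let C : Matrix Unit κ F := replicateRow Unit fun j => A u (c j)
  let D : Matrix Unit Unit F := of fun _ _ => A u w
  have hborder : A.submatrix (Sum.elim r fun _ : Unit => u) (Sum.elim c fun _ : Unit => w) =
      fromBlocks (A.submatrix r c) B C D := by
    ext (i | i) (j | j) <;> rfl
  have hzero : (fromBlocks (A.submatrix r c) B C D).det = 0 := by
    rw [← hborder]
    exact det_submatrix_eq_zero_of_rank_lt (by simpa using Nat.lt_succ_of_le hA) _ _
  let := invertibleOfIsUnitDet _ hdet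
  rw [det_fromBlocks₁₁, hdet.mul_right_eq_zero, det_unique, invOf_eq_nonsing_inv, Matrix.mul_assoc,
    Matrix.sub_apply, sub_eq_zero] at hzero
  exact hzero

end Rank

/-! ### Matrices fitting a graph -/

lemma minRank_le_iff {F : Type*} [Field F] {V : Type*} [Fintype V] {G : SimpleGraph V} {k : ℕ} :
    minRank F G ≤ k ↔ ∃ A : Matrix V V F, IsGraphMatrix F G A ∧ A.rank ≤ k := by
  classical
  constructor
  · intro h
    have hne : {r : ℕ | ∃ A : Matrix V V F, IsGraphMatrix F G A ∧ A.rank = r}.Nonempty :=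
      ⟨_, G.adjMatrix F, ⟨G.isSymm_adjMatrix, fun i j _ => by simp⟩, rfl⟩
    obtain ⟨A, hA, hr⟩ := Nat.sInf_mem hne
    exact ⟨A, hA, hr.trans_le h⟩
  · rintro ⟨A, hA, hr⟩
    have hle : minRank F G ≤ A.rank := Nat.sInf_le ⟨A, hA, rfl⟩
    exact hle.trans hr

section Conflict

variable {V W κ : Type*} {G : SimpleGraph V} {H : SimpleGraph W} {A : Matrix V V (ZMod 2)}

lemma IsGraphMatrix.apply_eq_adjMatrix [DecidableRel G.Adj] (hA : IsGraphMatrix (ZMod 2) G A)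
    {u w : V} (h : u ≠ w) : A u w = G.adjMatrix (ZMod 2) u w := by
  have hiff := hA.2 u w h
  rw [SimpleGraph.adjMatrix_apply]
  split_ifs with hadj
  · exact Fin.eq_one_of_ne_zero _ (hiff.2 hadj)
  · exact not_not.1 (mt hiff.1 hadj)

lemma IsGraphMatrix.submatrix_eq [DecidableEq W] [DecidableRel H.Adj]
    (hA : IsGraphMatrix (ZMod 2) G A) (e : H ↪g G) :
    A.submatrix e e = H.adjMatrix (ZMod 2) + diagonal fun i => A (e i) (e i) := by
  classical
  ext i j
  by_cases hij : i = j
  · simp [hij]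
  · simp [hij, hA.apply_eq_adjMatrix (e.injective.ne hij)]

variable [DecidableRel G.Adj] [DecidableRel H.Adj]

lemma adjMatrix_map (e : H ↪g G) (i j : W) :
    G.adjMatrix (ZMod 2) (e i) (e j) = H.adjMatrix (ZMod 2) i j := by
  simp [SimpleGraph.adjMatrix_apply]

variable [DecidableEq V] [DecidableEq W]

/-- The row of `u` in the columns `g`, in a matrix over `ZMod 2` that fits `G` and has diagonal `D`
on the vertices `g`. -/
def coreRow (G : SimpleGraph V) [DecidableRel G.Adj] (g : κ ↪ V) (D : κ → ZMod 2) (u : V) :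
    κ → ZMod 2 :=
  fun j => if u = g j then D j else G.adjMatrix (ZMod 2) u (g j)

/-- The principal submatrix on the vertices `g` of a matrix over `ZMod 2` that fits `G` and has
diagonal `D` on these vertices. -/
def coreMatrix (G : SimpleGraph V) [DecidableRel G.Adj] (g : κ ↪ V) (D : κ → ZMod 2) :
    Matrix κ κ (ZMod 2) :=
  of fun i => coreRow G g D (g i)

lemma isSymm_coreMatrix (g : κ ↪ V) (D : κ → ZMod 2) : (coreMatrix G g D).IsSymm := by
  ext i j
  by_cases hij : i = j
  · simp [hij]
  · simp [coreMatrix, coreRow, hij, Ne.symm hij, G.adj_comm]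

lemma coreRow_of_notMem_range {g : κ ↪ V} {u : V} (hu : u ∉ Set.range g) (D : κ → ZMod 2) :
    coreRow G g D u = fun i => G.adjMatrix (ZMod 2) u (g i) := by
  ext j
  exact if_neg fun h => hu ⟨j, h.symm⟩

lemma coreRow_map (e : H ↪g G) (g : κ ↪ W) (D : κ → ZMod 2) (u : W) :
    coreRow G (g.trans e.toEmbedding) D (e u) = coreRow H g D u := by
  ext j
  simp [coreRow]

lemma coreMatrix_map (e : H ↪g G) (g : κ ↪ W) (D : κ → ZMod 2) :
    coreMatrix G (g.trans e.toEmbedding) D = coreMatrix H g D := by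
  ext i j
  exact congrFun (coreRow_map e g D (g i)) j

lemma IsGraphMatrix.coreRow_eq (hA : IsGraphMatrix (ZMod 2) G A) (g : κ ↪ V) (u : V) :
    coreRow G g (fun i => A (g i) (g i)) u = fun j => A u (g j) := by
  ext j
  by_cases h : u = g j
  · simp [coreRow, h]
  · rw [coreRow, if_neg h, hA.apply_eq_adjMatrix h]

lemma IsGraphMatrix.coreMatrix_eq (hA : IsGraphMatrix (ZMod 2) G A) (g : κ ↪ V) :
    coreMatrix G g (fun i => A (g i) (g i)) = A.submatrix g g := by
  ext i j
  exact congrFun (hA.coreRow_eq g (g i)) j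

variable [Fintype κ] [DecidableEq κ]

/-- The only possible entry at `(u, w)` of a matrix over `ZMod 2` of rank at most `card κ` that fits
`G` and has diagonal `D` on the vertices `g`, provided that `coreMatrix G g D` is invertible. -/
noncomputable def forcedEntry (G : SimpleGraph V) [DecidableRel G.Adj] (g : κ ↪ V) (D : κ → ZMod 2)
    (u w : V) : ZMod 2 :=
  coreRow G g D u ⬝ᵥ (coreMatrix G g D)⁻¹ *ᵥ coreRow G g D w

/-- The vertices `u` and `w` are in conflict for the diagonal `D` if the entry forced by `D` at
`(u, w)` disagrees with the adjacency of `u` and `w`. -/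
def Conflict (G : SimpleGraph V) [DecidableRel G.Adj] (g : κ ↪ V) (D : κ → ZMod 2) (u w : V) :
    Prop :=
  u ≠ w ∧ forcedEntry G g D u w ≠ G.adjMatrix (ZMod 2) u w

lemma forcedEntry_comm (g : κ ↪ V) (D : κ → ZMod 2) (u w : V) :
    forcedEntry G g D u w = forcedEntry G g D w u := by
  rw [forcedEntry, dotProduct_mulVec, ← mulVec_transpose, (isSymm_coreMatrix g D).inv.eq,
    dotProduct_comm, forcedEntry]

lemma Conflict.symm {g : κ ↪ V} {D : κ → ZMod 2} {u w : V} (h : Conflict G g D u w) :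
    Conflict G g D w u := by
  refine ⟨h.1.symm, ?_⟩
  rw [forcedEntry_comm, ← G.isSymm_adjMatrix.apply]
  exact h.2

lemma conflict_map_iff (e : H ↪g G) (g : κ ↪ W) (D : κ → ZMod 2) (u w : W) :
    Conflict G (g.trans e.toEmbedding) D (e u) (e w) ↔ Conflict H g D u w := by
  simp only [Conflict, forcedEntry, coreRow_map, coreMatrix_map, adjMatrix_map, e.injective.ne_iff]

lemma IsGraphMatrix.not_conflict [Fintype V] (hA : IsGraphMatrix (ZMod 2) G A)
    (hrank : A.rank ≤ Fintype.card κ) (g : κ ↪ V)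
    (hdet : IsUnit (coreMatrix G g fun i => A (g i) (g i)).det) (u w : V) :
    ¬ Conflict G g (fun i => A (g i) (g i)) u w := by
  rintro ⟨hne, hforced⟩
  rw [hA.coreMatrix_eq] at hdet
  apply hforced
  rw [← hA.apply_eq_adjMatrix hne, apply_eq_of_rank_le_card hrank g g hdet u w, forcedEntry,
    hA.coreMatrix_eq, hA.coreRow_eq, hA.coreRow_eq]
  simp only [hA.1.apply]

lemma minRank_le_card_of_forall_not_conflict [Fintype V] {g : κ ↪ V} {D : κ → ZMod 2}
    (h : ∀ u w, ¬ Conflict G g D u w) : minRank (ZMod 2) G ≤ Fintype.card κ := by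
  let R : Matrix V κ (ZMod 2) := of (coreRow G g D)
  have happly (u w : V) : (R * ((coreMatrix G g D)⁻¹ * Rᵀ)) u w = forcedEntry G g D u w := rfl
  refine minRank_le_iff.2 ⟨R * ((coreMatrix G g D)⁻¹ * Rᵀ), ⟨IsSymm.ext fun u w => ?_, ?_⟩, ?_⟩
  · rw [happly, happly, forcedEntry_comm]
  · intro u w hne
    have hadj : forcedEntry G g D u w = G.adjMatrix (ZMod 2) u w :=
      not_not.1 fun hforced => h u w ⟨hne, hforced⟩
    simp [happly, hadj]
  · exact (rank_mul_le_left _ _).trans R.rank_le_card_width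

lemma xor_conflict_iff {g : κ ↪ V} {D D' ℓ : κ → ZMod 2}
    (hD : (coreMatrix G g D)⁻¹ - (coreMatrix G g D')⁻¹ = vecMulVec ℓ ℓ) {u w : V}
    (hu : u ∉ Set.range g) (hw : w ∉ Set.range g) (hne : u ≠ w) :
    Xor (Conflict G g D u w) (Conflict G g D' u w) ↔
      (ℓ ⬝ᵥ fun i => G.adjMatrix (ZMod 2) u (g i)) ≠ 0 ∧
        (ℓ ⬝ᵥ fun i => G.adjMatrix (ZMod 2) w (g i)) ≠ 0 := by
  have hsub : forcedEntry G g D u w - forcedEntry G g D' u w =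
      (ℓ ⬝ᵥ fun i => G.adjMatrix (ZMod 2) u (g i)) *
        (ℓ ⬝ᵥ fun i => G.adjMatrix (ZMod 2) w (g i)) := by
    simp only [forcedEntry, coreRow_of_notMem_range hu, coreRow_of_notMem_range hw]
    rw [← dotProduct_sub, ← sub_mulVec, hD, vecMulVec_mulVec, dotProduct_smul,
      MulOpposite.smul_eq_mul_unop, MulOpposite.unop_op, dotProduct_comm]
  have hxor : ∀ a b c : ZMod 2, Xor (a ≠ c) (b ≠ c) ↔ a - b ≠ 0 := by decide
  simp only [Conflict, and_iff_right hne]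
  rw [hxor, hsub, mul_ne_zero_iff]

end Conflict

/-! ### The full house -/

instance : DecidableRel fullHouse.Adj :=
  inferInstanceAs <| DecidableRel (SimpleGraph.fromEdgeSet _).Adj

/-- The vertices `0, 1, 3` of the full house, which carry an invertible principal submatrix of every
matrix of rank at most three over `ZMod 2` that fits the full house. -/
def fullHouseCore : Fin 3 ↪ Fin 5 := ⟨![0, 1, 3], by decide⟩

/-- The restrictions to `fullHouseCore` of the diagonals of the matrices of rank at most three over
`ZMod 2` that fit the full house. -/
def fullHouseDiag : Fin 4 → Fin 3 → ZMod 2 :=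
  ![![0, 0, 1], ![0, 1, 1], ![1, 1, 0], ![1, 1, 1]]

/-- The inverses of the principal submatrices on `fullHouseCore` with diagonals `fullHouseDiag`. -/
def fullHouseInv : Fin 4 → Matrix (Fin 3) (Fin 3) (ZMod 2) :=
  ![!![1, 1, 1; 1, 0, 0; 1, 0, 1], !![0, 1, 1; 1, 0, 0; 1, 0, 1],
    !![1, 0, 1; 0, 0, 1; 1, 1, 0], !![0, 1, 1; 1, 1, 1; 1, 1, 0]]

lemma exists_comp_fullHouseCore_eq (D : Fin 5 → ZMod 2)
    (hD : (fullHouse.adjMatrix (ZMod 2) + diagonal D).rank ≤ 3) :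
    ∃ k, D ∘ fullHouseCore = fullHouseDiag k := by
  have hminor (r c : Fin 4 → Fin 5) :
      ((fullHouse.adjMatrix (ZMod 2) + diagonal D).submatrix r c).det = 0 :=
    det_submatrix_eq_zero_of_rank_lt (by simpa using Nat.lt_succ_of_le hD) r c
  -- Two minors suffice to exclude all other diagonals.
  have h₁ := hminor ![0, 1, 2, 3] ![0, 1, 2, 4]
  have h₂ := hminor ![0, 1, 3, 4] ![0, 1, 3, 4]
  clear hD hminor
  revert D
  decide +kernel

lemma coreRow_dotProduct_fullHouseInv (k : Fin 4) {i j : Fin 5} (hij : i ≠ j) :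
    coreRow fullHouse fullHouseCore (fullHouseDiag k) i ⬝ᵥ
      fullHouseInv k *ᵥ coreRow fullHouse fullHouseCore (fullHouseDiag k) j =
        fullHouse.adjMatrix (ZMod 2) i j := by
  fin_cases k <;> fin_cases i <;> revert j <;> decide +kernel

lemma notMem_range_fullHouseCore_trans {V : Type*} {G : SimpleGraph V} {f : fullHouse ↪g G} {u : V}
    (hu : u ∉ Set.range f) : u ∉ Set.range (fullHouseCore.trans f.toEmbedding) :=
  fun ⟨i, hi⟩ => hu ⟨fullHouseCore i, hi⟩

section FullHouse

variable {V : Type*} {G : SimpleGraph V} [DecidableEq V] [DecidableRel G.Adj]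

lemma coreMatrix_mul_fullHouseInv (f : fullHouse ↪g G) (k : Fin 4) :
    coreMatrix G (fullHouseCore.trans f.toEmbedding) (fullHouseDiag k) * fullHouseInv k = 1 := by
  rw [coreMatrix_map]
  revert k
  decide +kernel

lemma inv_coreMatrix_fullHouse (f : fullHouse ↪g G) (k : Fin 4) :
    (coreMatrix G (fullHouseCore.trans f.toEmbedding) (fullHouseDiag k))⁻¹ = fullHouseInv k :=
  inv_eq_right_inv (coreMatrix_mul_fullHouseInv f k)

/-- Conflict of two vertices for the `k`-th diagonal of the copy `f` of the full house. -/
abbrev FullHouseConflict (f : fullHouse ↪g G) (k : Fin 4) (u w : V) : Prop :=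
  Conflict G (fullHouseCore.trans f.toEmbedding) (fullHouseDiag k) u w

lemma minRank_le_three_iff_exists_forall_not_conflict [Fintype V] (f : fullHouse ↪g G) :
    minRank (ZMod 2) G ≤ 3 ↔ ∃ k, ∀ u w, ¬ FullHouseConflict f k u w := by
  constructor
  · intro h
    obtain ⟨A, hA, hrank⟩ := minRank_le_iff.1 h
    obtain ⟨k, hk⟩ := exists_comp_fullHouseCore_eq (fun i => A (f i) (f i)) <| by
      rw [← hA.submatrix_eq f]
      exact (rank_submatrix_le A f f).trans hrank
    have hdet := isUnit_det_of_right_inverse (coreMatrix_mul_fullHouseInv f k)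
    refine ⟨k, fun u w => ?_⟩
    rw [FullHouseConflict, ← hk]
    rw [← hk] at hdet
    exact hA.not_conflict (by simpa using hrank) _ hdet u w
  · rintro ⟨k, hk⟩
    simpa using minRank_le_card_of_forall_not_conflict hk

lemma exists_forall_not_conflict_of_minRank_deleteVert_le [Fintype V] (f : fullHouse ↪g G) {v : V}
    (hv : v ∉ Set.range f) (h : minRank (ZMod 2) (deleteVert G v) ≤ 3) :
    ∃ k, ∀ u w, u ≠ v → w ≠ v → ¬ FullHouseConflict f k u w := by
  classical
  let e : deleteVert G v ↪g G := SimpleGraph.Embedding.comap (Function.Embedding.subtype _) G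
  let f' : fullHouse ↪g deleteVert G v :=
    ⟨f.toEmbedding.codRestrict {u | u ≠ v} fun i hi => hv ⟨i, hi⟩, f.map_adj_iff⟩
  obtain ⟨k, hk⟩ := (minRank_le_three_iff_exists_forall_not_conflict f').1 h
  refine ⟨k, fun u w hu hw hconf => hk ⟨u, hu⟩ ⟨w, hw⟩ ?_⟩
  exact (conflict_map_iff e (fullHouseCore.trans f'.toEmbedding) _ ⟨u, hu⟩ ⟨w, hw⟩).1 hconf

/-! ### Conflicts with the full house -/

lemma not_fullHouseConflict_copy (f : fullHouse ↪g G) (k : Fin 4) (i j : Fin 5) :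
    ¬ FullHouseConflict f k (f i) (f j) := by
  rintro ⟨hne, hconf⟩
  rw [forcedEntry, inv_coreMatrix_fullHouse, coreRow_map, coreRow_map, adjMatrix_map] at hconf
  exact hconf (coreRow_dotProduct_fullHouseInv k (ne_of_apply_ne f hne))

/-- The vertex `u` is in conflict with no vertex of the copy `f` for the `k`-th diagonal. -/
def Compatible (f : fullHouse ↪g G) (k : Fin 4) (u : V) : Prop :=
  ∀ i, ¬ FullHouseConflict f k u (f i)

/-- The adjacencies of `u` to the copy `f` of the full house, as a vector. -/
def copyRow (f : fullHouse ↪g G) (u : V) : Fin 5 → ZMod 2 :=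
  fun i => G.adjMatrix (ZMod 2) u (f i)

variable {f : fullHouse ↪g G} {k l : Fin 4} {u w : V} {S : Set V}

lemma compatible_iff (hu : u ∉ Set.range f) :
    Compatible f k u ↔ ∀ i, (copyRow f u ∘ fullHouseCore) ⬝ᵥ
      fullHouseInv k *ᵥ coreRow fullHouse fullHouseCore (fullHouseDiag k) i = copyRow f u i := by
  refine forall_congr' fun i => ?_
  have hne : u ≠ f i := fun h => hu ⟨i, h.symm⟩
  rw [FullHouseConflict, Conflict, forcedEntry, inv_coreMatrix_fullHouse, coreRow_map,
    coreRow_of_notMem_range (notMem_range_fullHouseCore_trans hu), and_iff_right hne, not_not]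
  rfl

lemma compatible_zero_iff (hu : u ∉ Set.range f) : Compatible f 0 u ↔
    copyRow f u 3 = copyRow f u 4 ∧ copyRow f u 0 = copyRow f u 1 + copyRow f u 2 := by
  rw [compatible_iff hu]
  generalize copyRow f u = r
  revert r
  decide +kernel

lemma compatible_one_iff (hu : u ∉ Set.range f) : Compatible f 1 u ↔
    copyRow f u 1 = copyRow f u 2 ∧ copyRow f u 3 = copyRow f u 4 := by
  rw [compatible_iff hu]
  generalize copyRow f u = r
  revert r
  decide +kernel

lemma compatible_two_iff (hu : u ∉ Set.range f) : Compatible f 2 u ↔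
    copyRow f u 1 = copyRow f u 2 ∧
      copyRow f u 0 = copyRow f u 1 + copyRow f u 3 + copyRow f u 4 := by
  rw [compatible_iff hu]
  generalize copyRow f u = r
  revert r
  decide +kernel

lemma compatible_three_iff (hu : u ∉ Set.range f) : Compatible f 3 u ↔
    copyRow f u 1 = copyRow f u 2 ∧ copyRow f u 3 = copyRow f u 4 := by
  rw [compatible_iff hu]
  generalize copyRow f u = r
  revert r
  decide +kernel

lemma compatible_three_iff_compatible_one (hu : u ∉ Set.range f) :
    Compatible f 3 u ↔ Compatible f 1 u := by
  rw [compatible_three_iff hu, compatible_one_iff hu]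

lemma Compatible.one_of_zero_of_two (hu : u ∉ Set.range f) (h₀ : Compatible f 0 u)
    (h₂ : Compatible f 2 u) : Compatible f 1 u :=
  (compatible_one_iff hu).2 ⟨((compatible_two_iff hu).1 h₂).1, ((compatible_zero_iff hu).1 h₀).1⟩

lemma FullHouseConflict.notMem_range (hcompat : ∀ v ∉ Set.range f, Compatible f k v)
    (h : FullHouseConflict f k u w) : u ∉ Set.range f ∧ w ∉ Set.range f := by
  have left {u w : V} (h : FullHouseConflict f k u w) : u ∉ Set.range f := by
    rintro ⟨i, rfl⟩
    by_cases hw : w ∈ Set.range f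
    · obtain ⟨j, rfl⟩ := hw
      exact not_fullHouseConflict_copy f k i j h
    · exact hcompat w hw i h.symm
  exact ⟨left h, left h.symm⟩

/-- Some two vertices of `S` are in conflict for the `k`-th diagonal of the copy `f`. -/
def HasConflict (f : fullHouse ↪g G) (k : Fin 4) (S : Set V) : Prop :=
  ∃ u ∈ S, ∃ w ∈ S, FullHouseConflict f k u w

lemma HasConflict.mono {T : Set V} (h : HasConflict f k S) (hST : S ⊆ T) : HasConflict f k T :=
  let ⟨u, hu, w, hw, hconf⟩ := h
  ⟨u, hST hu, w, hST hw, hconf⟩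

lemma hasConflict_of_not_compatible (h : ¬ Compatible f k u) (hu : u ∈ S) :
    HasConflict f k (Set.range f ∪ S) := by
  simp only [Compatible, not_forall, not_not] at h
  obtain ⟨i, hi⟩ := h
  exact ⟨u, Or.inr hu, f i, Or.inl ⟨i, rfl⟩, hi⟩

/-! ### Three vertices suffice -/

lemma xor_fullHouseConflict_iff {ℓ : Fin 3 → ZMod 2}
    (hinv : fullHouseInv k - fullHouseInv l = vecMulVec ℓ ℓ) (hu : u ∉ Set.range f)
    (hw : w ∉ Set.range f) (hne : u ≠ w) :
    Xor (FullHouseConflict f k u w) (FullHouseConflict f l u w) ↔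
      ℓ ⬝ᵥ (copyRow f u ∘ fullHouseCore) ≠ 0 ∧ ℓ ⬝ᵥ (copyRow f w ∘ fullHouseCore) ≠ 0 := by
  rw [← inv_coreMatrix_fullHouse f, ← inv_coreMatrix_fullHouse f] at hinv
  exact xor_conflict_iff hinv (notMem_range_fullHouseCore_trans hu)
    (notMem_range_fullHouseCore_trans hw) hne

lemma HasConflict.transfer {ℓ : Fin 3 → ZMod 2}
    (hinv : fullHouseInv k - fullHouseInv l = vecMulVec ℓ ℓ)
    (hℓ : ∀ u ∉ Set.range f, Compatible f k u → Compatible f l u →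
      ℓ ⬝ᵥ (copyRow f u ∘ fullHouseCore) = 0)
    (hcompat : ∀ u ∉ Set.range f, Compatible f l u) (h : HasConflict f l S) :
    HasConflict f k (Set.range f ∪ S) := by
  obtain ⟨u, hu, w, hw, hconf⟩ := h
  obtain ⟨hu', hw'⟩ := hconf.notMem_range hcompat
  by_cases hk : Compatible f k u
  · refine ⟨u, Or.inr hu, w, Or.inr hw, by_contra fun hnot => ?_⟩
    have hxor := (xor_fullHouseConflict_iff hinv hu' hw' hconf.1).1 (Or.inr ⟨hconf, hnot⟩)
    exact hxor.1 (hℓ u hu' hk (hcompat u hu'))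
  · exact hasConflict_of_not_compatible hk hu

lemma HasConflict.zero_of_one (hcompat : ∀ u ∉ Set.range f, Compatible f 1 u)
    (h : HasConflict f 1 S) : HasConflict f 0 (Set.range f ∪ S) := by
  refine h.transfer (ℓ := ![1, 0, 0]) (by decide +kernel) (fun u hu h₀ h₁ => ?_) hcompat
  rw [compatible_zero_iff hu] at h₀
  rw [compatible_one_iff hu] at h₁
  generalize copyRow f u = r at h₀ h₁
  revert r
  decide +kernel

lemma HasConflict.two_of_three (hcompat : ∀ u ∉ Set.range f, Compatible f 3 u)
    (h : HasConflict f 3 S) : HasConflict f 2 (Set.range f ∪ S) := by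
  refine h.transfer (ℓ := ![1, 1, 0]) (by decide +kernel) (fun u hu h₂ h₃ => ?_) hcompat
  rw [compatible_two_iff hu] at h₂
  rw [compatible_three_iff hu] at h₃
  generalize copyRow f u = r at h₂ h₃
  revert r
  decide +kernel

lemma exists_card_le_three_of_xor {α : Type*} {P Q : α → α → Prop} {s : Set α}
    (hmem : ∀ u w, Xor (P u w) (Q u w) → u ∈ s ∧ w ∈ s)
    (hxor : ∀ u ∈ s, ∀ w ∈ s, u ≠ w → Xor (P u w) (Q u w))
    (hP : ∃ u w, P u w) (hQ : ∃ u w, Q u w) :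
    ∃ T : Finset α, T.card ≤ 3 ∧ (∃ u ∈ T, ∃ w ∈ T, P u w) ∧ ∃ u ∈ T, ∃ w ∈ T, Q u w := by
  classical
  obtain ⟨v, w, hvw⟩ := hP
  obtain ⟨x, y, hxy⟩ := hQ
  by_cases hvw' : Q v w
  · exact ⟨{v, w}, Finset.card_le_two.trans (by norm_num), ⟨v, by simp, w, by simp, hvw⟩,
      v, by simp, w, by simp, hvw'⟩
  by_cases hxy' : P x y
  · exact ⟨{x, y}, Finset.card_le_two.trans (by norm_num), ⟨x, by simp, y, by simp, hxy'⟩,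
      x, by simp, y, by simp, hxy⟩
  obtain rfl | hvx := eq_or_ne v x
  · exact ⟨{v, w, y}, Finset.card_le_three, ⟨v, by simp, w, by simp, hvw⟩,
      v, by simp, y, by simp, hxy⟩
  have hv : v ∈ s := (hmem v w (Or.inl ⟨hvw, hvw'⟩)).1
  have hx : x ∈ s := (hmem x y (Or.inr ⟨hxy, hxy'⟩)).1
  rcases hxor v hv x hx hvx with ⟨hP, -⟩ | ⟨hQ, -⟩
  · exact ⟨{v, x, y}, Finset.card_le_three, ⟨v, by simp, x, by simp, hP⟩,
      x, by simp, y, by simp, hxy⟩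
  · exact ⟨{v, w, x}, Finset.card_le_three, ⟨v, by simp, w, by simp, hvw⟩,
      v, by simp, x, by simp, hQ⟩

lemma exists_card_le_three_hasConflict_of_not_compatible (h : ∀ k, ∃ u w, FullHouseConflict f k u w)
    (hu : u ∉ Set.range f) (hcompat : ¬ Compatible f 1 u) :
    ∃ T : Finset V, T.card ≤ 3 ∧ ∀ k, HasConflict f k (Set.range f ∪ T) := by
  obtain ⟨l, hl⟩ : ∃ l, ∀ k ≠ l, ¬ Compatible f k u := by
    have h₃ := mt (compatible_three_iff_compatible_one hu).1 hcompat
    by_cases h₀ : Compatible f 0 u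
    · have h₂ := mt (Compatible.one_of_zero_of_two hu h₀) hcompat
      exact ⟨0, by simp [Fin.forall_fin_succ, *]⟩
    · exact ⟨2, by simp [Fin.forall_fin_succ, *]⟩
  obtain ⟨x, y, hxy⟩ := h l
  refine ⟨{u, x, y}, Finset.card_le_three, fun k => ?_⟩
  obtain rfl | hk := eq_or_ne k l
  · exact ⟨x, by simp, y, by simp, hxy⟩
  · exact hasConflict_of_not_compatible (hl k hk) (by simp)

lemma exists_card_le_three_hasConflict_of_compatible (h : ∀ k, ∃ u w, FullHouseConflict f k u w)
    (hcompat : ∀ u ∉ Set.range f, Compatible f 1 u) :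
    ∃ T : Finset V, T.card ≤ 3 ∧ ∀ k, HasConflict f k (Set.range f ∪ T) := by
  have hcompat₃ : ∀ u ∉ Set.range f, Compatible f 3 u := fun u hu =>
    (compatible_three_iff_compatible_one hu).2 (hcompat u hu)
  let ℓ : Fin 3 → ZMod 2 := ![0, 1, 1]
  have hinv : fullHouseInv 1 - fullHouseInv 3 = vecMulVec ℓ ℓ := by decide +kernel
  obtain ⟨T, hT, h₁, h₃⟩ : ∃ T : Finset V, T.card ≤ 3 ∧ HasConflict f 1 T ∧ HasConflict f 3 T := by
    refine exists_card_le_three_of_xor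
      (s := {u | u ∉ Set.range f ∧ ℓ ⬝ᵥ (copyRow f u ∘ fullHouseCore) ≠ 0})
      (fun u w hxor => ?_) (fun u hu w hw hne => ?_) (h 1) (h 3)
    · have hne : u ≠ w := hxor.or.elim And.left And.left
      obtain ⟨hu, hw⟩ : u ∉ Set.range f ∧ w ∉ Set.range f :=
        hxor.or.elim (·.notMem_range hcompat) (·.notMem_range hcompat₃)
      have hℓ := (xor_fullHouseConflict_iff hinv hu hw hne).1 hxor
      exact ⟨⟨hu, hℓ.1⟩, hw, hℓ.2⟩
    · exact (xor_fullHouseConflict_iff hinv hu.1 hw.1 hne).2 ⟨hu.2, hw.2⟩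
  refine ⟨T, hT, fun k => ?_⟩
  fin_cases k
  · exact h₁.zero_of_one hcompat
  · exact h₁.mono Set.subset_union_right
  · exact h₃.two_of_three hcompat₃
  · exact h₃.mono Set.subset_union_right

lemma exists_card_le_three_hasConflict (h : ∀ k, ∃ u w, FullHouseConflict f k u w) :
    ∃ T : Finset V, T.card ≤ 3 ∧ ∀ k, HasConflict f k (Set.range f ∪ T) := by
  by_cases hcompat : ∀ u ∉ Set.range f, Compatible f 1 u
  · exact exists_card_le_three_hasConflict_of_compatible h hcompat
  · push Not at hcompat
    obtain ⟨u, hu, hcompat⟩ := hcompat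
    exact exists_card_le_three_hasConflict_of_not_compatible h hu hcompat

end FullHouse

/-- If `G ∈ F₄(F₂, full house)`, then `G` has at most 8 vertices. -/
theorem card_le_eight_of_forbRel_fullHouse {V : Type*} [Fintype V] [DecidableEq V]
    (G : SimpleGraph V) (h : MemForbRel (ZMod 2) 4 fullHouse G) :
    Fintype.card V ≤ 8 := by
  classical
  obtain ⟨hG, f, hf⟩ := h
  have hconf : ∀ k, ∃ u w, FullHouseConflict f k u w := by
    by_contra! hnone
    have hle := (minRank_le_three_iff_exists_forall_not_conflict f).2 hnone
    omega
  obtain ⟨T, hT, hblock⟩ := exists_card_le_three_hasConflict hconf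
  have hcover (v : V) : v ∈ Finset.univ.image f ∪ T := by
    by_contra hv
    have hv' : v ∉ Set.range f ∪ T := by simpa using hv
    obtain ⟨k, hk⟩ := exists_forall_not_conflict_of_minRank_deleteVert_le f
      (fun hmem => hv' (Or.inl hmem)) (Nat.le_of_succ_le_succ (hf v fun hmem => hv' (Or.inl hmem)))
    obtain ⟨u, hu, w, hw, huw⟩ := hblock k
    exact hk u w (ne_of_mem_of_not_mem hu hv') (ne_of_mem_of_not_mem hw hv') huw
  calc Fintype.card V = (Finset.univ.image f ∪ T).card := by
        rw [Finset.eq_univ_of_forall hcover, Finset.card_univ]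
    _ ≤ (Finset.univ.image f).card + T.card := Finset.card_union_le _ _
    _ ≤ 5 + 3 := add_le_add (Finset.card_image_le.trans (by simp)) hT
end

section
/- Every graph in F₄(F₂) has at most 8 vertices; that is, if G is a finite simple graph with mr(F₂,G) ≥ 4 and mr(F₂,G−v) ≤ 3 for every vertex v of G, then |V(G)| ≤ 8. -/
open Matrix

/-- `G ∈ F_K(F)`: `G` is a minimal forbidden subgraph for the class of graphs
with minimum rank at most `K - 1` over `F`, i.e. `mr(F, G) ≥ K` and
`mr(F, G - v) ≤ K - 1` for every vertex `v`. -/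
def MemForbClass (F : Type*) [Field F] (K : ℕ) {V : Type*} [Fintype V] [DecidableEq V]
    (G : SimpleGraph V) : Prop :=
  K ≤ minRank F G ∧ ∀ v : V, minRank F (deleteVert G v) + 1 ≤ K

/-!
Every symmetric `3 × 3` matrix over `F₂` is a Gram matrix, so `mr(F₂, G) ≤ 3` exactly when the
vertices of `G` can be represented by vectors of `F₂³` in such a way that two distinct vertices are
adjacent if and only if their dot product is `1`.

Suppose that any 8 vertices of `G` can be so represented, and let `H` be an induced subgraph of `G`
with a fixed representation `w`. The neighbours of a further vertex in `H` prescribe its dot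
products with `w`, and choosing a vector for each prescription extends `w` to all of `G`, unless `G`
contains an obstruction: `H` together with one vertex whose prescription has no solution, or with
two vertices whose adjacency disagrees with the dot product of their vectors. So if no obstruction
occurs in `G`, because each of them either has at most 8 vertices and no representation or contains
a graph already known not to occur in `G`, then `G` is representable or `H` does not occur in it
either. A chain of such exclusions ends with the graph without vertices, which occurs in every
graph; hence `G` is representable.
-/

section DotRep

variable {F : Type*} [Field F] {V W ι : Type*}

/-- `r` represents the vertices of `G` by vectors over `F` so that distinct vertices are adjacent
if and only if their dot product is nonzero. -/
def IsDotRep [Fintype ι] (G : SimpleGraph V) (r : V → ι → F) : Prop :=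
  ∀ u v, u ≠ v → (r u ⬝ᵥ r v ≠ 0 ↔ G.Adj u v)

theorem minRank_le_card_of_isDotRep [Fintype V] [Fintype ι] {G : SimpleGraph V} {r : V → ι → F}
    (hr : IsDotRep G r) : minRank F G ≤ Fintype.card ι := by
  have hgraph : IsGraphMatrix F G (of r * (of r)ᵀ) :=
    ⟨by rw [IsSymm, transpose_mul, transpose_transpose], hr⟩
  calc minRank F G ≤ (of r * (of r)ᵀ).rank := Nat.sInf_le ⟨_, hgraph, rfl⟩
    _ ≤ (of r).rank := rank_mul_le_left _ _
    _ ≤ Fintype.card ι := rank_le_card_width _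

variable (F) in
theorem exists_isGraphMatrix_rank_eq_minRank [Fintype V] (G : SimpleGraph V) :
    ∃ A : Matrix V V F, IsGraphMatrix F G A ∧ A.rank = minRank F G := by
  classical
  have hadj : IsGraphMatrix F G (G.adjMatrix F) :=
    ⟨G.isSymm_adjMatrix, fun i j _ => by simp [SimpleGraph.adjMatrix_apply]⟩
  exact Nat.sInf_mem (s := {r | ∃ A, IsGraphMatrix F G A ∧ A.rank = r}) ⟨_, _, hadj, rfl⟩

theorem exists_mul_mul_eq_self_of_rank_le [Fintype V] [Fintype W] {A : Matrix V W F} {d : ℕ}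
    (hA : A.rank ≤ d) :
    ∃ (M : Matrix V (Fin d) F) (L : Matrix (Fin d) V F), M * L * A = A := by
  classical
  have hfinrank : Module.finrank F A.mulVecLin.range ≤ Module.finrank F (Fin d → F) := by
    rwa [Module.finrank_fin_fun]
  obtain ⟨i, hi⟩ := finrank_le_iff_exists_linearMap.mp hfinrank
  obtain ⟨g, hg⟩ := i.exists_leftInverse_of_injective (LinearMap.ker_eq_bot.mpr hi)
  obtain ⟨e, he⟩ := LinearMap.exists_extend i
  have hfix (x) : g (e (A *ᵥ x)) = A *ᵥ x := by
    have hx : A *ᵥ x ∈ A.mulVecLin.range := LinearMap.mem_range_self A.mulVecLin x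
    rw [show e (A *ᵥ x) = i ⟨_, hx⟩ from LinearMap.congr_fun he ⟨_, hx⟩]
    exact congrArg Subtype.val (LinearMap.congr_fun hg ⟨_, hx⟩)
  refine ⟨LinearMap.toMatrix' (A.mulVecLin.range.subtype ∘ₗ g), LinearMap.toMatrix' e, ?_⟩
  refine Matrix.toLin'.injective (LinearMap.ext fun x => ?_)
  simpa [toLin'_mul] using hfix x

theorem exists_eq_mul_mul_transpose_of_rank_le [Fintype V] {A : Matrix V V F} (hA : A.IsSymm)
    {d : ℕ} (hr : A.rank ≤ d) :
    ∃ (M : Matrix V (Fin d) F) (B : Matrix (Fin d) (Fin d) F), B.IsSymm ∧ A = M * B * Mᵀ := by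
  obtain ⟨M, L, hML⟩ := exists_mul_mul_eq_self_of_rank_le hr
  have hMLt : A * Lᵀ * Mᵀ = A := by
    simpa [hA.eq, Matrix.mul_assoc] using congrArg transpose hML
  refine ⟨M, L * A * Lᵀ, by simp [IsSymm, hA.eq, Matrix.mul_assoc], ?_⟩
  calc A = M * L * (A * Lᵀ * Mᵀ) := by rw [hMLt, hML]
    _ = M * (L * A * Lᵀ) * Mᵀ := by simp only [Matrix.mul_assoc]

theorem exists_dotProduct_eq_of_isSymm : ∀ B : Matrix (Fin 3) (Fin 3) (ZMod 2), B.IsSymm →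
    ∃ x : Fin 3 → ZMod 2, x ⬝ᵥ x = B 0 0 ∧
      ∃ y : Fin 3 → ZMod 2, x ⬝ᵥ y = B 0 1 ∧ y ⬝ᵥ y = B 1 1 ∧
        ∃ z : Fin 3 → ZMod 2, x ⬝ᵥ z = B 0 2 ∧ y ⬝ᵥ z = B 1 2 ∧ z ⬝ᵥ z = B 2 2 := by
  unfold IsSymm
  decide +kernel

theorem exists_mul_transpose_eq_of_isSymm {B : Matrix (Fin 3) (Fin 3) (ZMod 2)} (hB : B.IsSymm) :
    ∃ P : Matrix (Fin 3) (Fin 3) (ZMod 2), P * Pᵀ = B := by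
  obtain ⟨x, hxx, y, hxy, hyy, z, hxz, hyz, hzz⟩ := exists_dotProduct_eq_of_isSymm B hB
  refine ⟨of ![x, y, z], ?_⟩
  ext i j
  change ![x, y, z] i ⬝ᵥ ![x, y, z] j = B i j
  fin_cases i <;> fin_cases j <;>
    simp [hxx, hxy, hyy, hxz, hyz, hzz, dotProduct_comm y x, dotProduct_comm z,
      hB.apply 0 1, hB.apply 0 2, hB.apply 1 2]

theorem minRank_le_three_iff_exists_isDotRep [Fintype V] {G : SimpleGraph V} :
    minRank (ZMod 2) G ≤ 3 ↔ ∃ r : V → Fin 3 → ZMod 2, IsDotRep G r := by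
  refine ⟨fun h => ?_, fun ⟨r, hr⟩ => minRank_le_card_of_isDotRep hr⟩
  obtain ⟨A, ⟨hsymm, hadj⟩, hrank⟩ := exists_isGraphMatrix_rank_eq_minRank (ZMod 2) G
  obtain ⟨M, B, hB, rfl⟩ := exists_eq_mul_mul_transpose_of_rank_le hsymm (hrank.trans_le h)
  obtain ⟨P, rfl⟩ := exists_mul_transpose_eq_of_isSymm hB
  have hgram : M * (P * Pᵀ) * Mᵀ = (M * P) * (M * P)ᵀ := by
    simp only [transpose_mul, Matrix.mul_assoc]
  rw [hgram] at hadj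
  exact ⟨M * P, hadj⟩

end DotRep

/-- A graph on the positions `0, ..., n - 1`, given by the rows of the strict upper triangle of its
adjacency matrix. The rows may have any length, but only codes of the form `encode a l` matter. -/
abbrev GraphCode := List (List Bool)

namespace GraphCode

section Codes

variable {V W α : Type*}

/-- The code of the graph induced on the vertices in `l`, where `a` is the adjacency relation. -/
def encode (a : V → V → Bool) : List V → GraphCode
  | [] => []
  | v :: l => l.map (a v) :: encode a l

/-- Adjacency of two positions in a code, with value `false` outside the range of the code and on
the diagonal. -/
def adj : GraphCode → ℕ → ℕ → Bool
  | row :: _, 0, j + 1 => row.getD j false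
  | row :: _, i + 1, 0 => row.getD i false
  | _ :: K, i + 1, j + 1 => adj K i j
  | _, _, _ => false

theorem length_encode (a : V → V → Bool) (l : List V) : (encode a l).length = l.length := by
  induction l with simp [encode, *]

theorem length_eq_of_encode_eq {a : V → V → Bool} {b : α → α → Bool} {l : List V} {w : List α}
    (h : encode a l = encode b w) : l.length = w.length := by
  rw [← length_encode a, h, length_encode]

theorem encode_map (a : V → V → Bool) (f : W → V) (l : List W) :
    encode a (l.map f) = encode (fun u v => a (f u) (f v)) l := by
  induction l with simp [encode, *]

theorem encode_eq_encode_iff {a a' : V → V → Bool} {l : List V} :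
    encode a l = encode a' l ↔ l.Pairwise fun u v => a u v = a' u v := by
  induction l with simp [encode, *]

theorem encode_congr {a a' : V → V → Bool} {l : List V} (hl : l.Nodup)
    (h : ∀ u v, u ≠ v → a u v = a' u v) : encode a l = encode a' l :=
  encode_eq_encode_iff.mpr (hl.imp (h _ _))

theorem adj_encode {a : V → V → Bool} (ha : ∀ u v, a u v = a v u) (l : List V) {i j : ℕ}
    (hij : i ≠ j) (hi : i < l.length) (hj : j < l.length) :
    (encode a l).adj i j = a l[i] l[j] := by
  induction l generalizing i j with
  | nil => simp at hi
  | cons v l ih =>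
    rcases i with - | i <;> rcases j with - | j
    · exact absurd rfl hij
    · have hj : j < l.length := by simpa using hj
      simp [encode, adj, hj]
    · have hi : i < l.length := by simpa using hi
      simp [encode, adj, hi, ha v]
    · exact ih (by simpa using hij) _ _

/-- The `x ∈ D` whose values `b x y` for `y ∈ s` are those listed in `row`. Filtering by one `y`
at a time keeps the evaluation by the kernel short. -/
def candidates (D : List α) (b : α → α → Bool) : List α → List Bool → List α
  | y :: s, c :: row => (candidates D b s row).filter fun x => bif b x y then c else !c
  | [], [] => D
  | _, _ => []

/-- All lists of elements of `D` that represent the positions of a code with respect to `b`. -/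
def realizations (D : List α) (b : α → α → Bool) : GraphCode → List (List α)
  | [] => [[]]
  | row :: K => (realizations D b K).flatMap fun s => (candidates D b s row).map (· :: s)

theorem mem_candidates {D : List α} {b : α → α → Bool} {x : α} {s : List α} {row : List Bool} :
    x ∈ candidates D b s row ↔ x ∈ D ∧ s.map (b x) = row := by
  induction s generalizing row with
  | nil => cases row <;> simp [candidates]
  | cons y s ih =>
    cases row with
    | nil => simp [candidates]
    | cons c row => grind [candidates]

theorem mem_realizations {D : List α} {b : α → α → Bool} {s : List α} {K : GraphCode} :
    s ∈ realizations D b K ↔ (∀ x ∈ s, x ∈ D) ∧ encode b s = K := by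
  induction K generalizing s with
  | nil => cases s <;> simp [realizations, encode]
  | cons row K ih =>
    cases s with
    | nil => simp [realizations, encode]
    | cons x s => grind [realizations, encode, mem_candidates]

/-- `r` represents the graph with adjacency `a` by elements of `α`: distinct vertices are adjacent
according to the value of `b` (such as a dot product) at their images. `r` need not be injective,
and `a` is ignored on the diagonal. -/
def IsRep (a : V → V → Bool) (b : α → α → Bool) (r : V → α) : Prop :=
  ∀ u v, u ≠ v → a u v = b (r u) (r v)

theorem realizations_encode_ne_nil {D : List α} {b : α → α → Bool} {a : V → V → Bool} {r : V → α}
    (hD : ∀ v, r v ∈ D) (hr : IsRep a b r) {l : List V} (hl : l.Nodup) :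
    realizations D b (encode a l) ≠ [] := by
  have hmem : l.map r ∈ realizations D b (encode a l) := by
    rw [mem_realizations, encode_map, ← encode_congr hl hr]
    simpa using fun v _ => hD v
  exact List.ne_nil_of_mem hmem

/-- Whether the graph `H` occurs as an induced subgraph of `K`. -/
def hasCopyOf (K H : GraphCode) : Bool :=
  (realizations (List.range K.length) K.adj H).any fun s => decide s.Nodup

theorem exists_encode_eq_of_hasCopyOf {a : V → V → Bool} (ha : ∀ u v, a u v = a v u)
    {l : List V} (hl : l.Nodup) {H : GraphCode} (h : (encode a l).hasCopyOf H) :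
    ∃ l' : List V, l'.Nodup ∧ encode a l' = H := by
  simp only [hasCopyOf, List.any_eq_true, mem_realizations, List.mem_range, length_encode,
    decide_eq_true_eq] at h
  obtain ⟨s, ⟨hs, rfl⟩, hnodup⟩ := h
  lift s to List (Fin l.length) using hs
  have hs : s.Nodup := hnodup.of_map _
  refine ⟨s.map l.get, hs.map hl.injective_get, ?_⟩
  rw [encode_map, encode_map]
  exact encode_congr hs fun i j hij =>
    (adj_encode ha l (Fin.val_injective.ne hij) i.isLt j.isLt).symm

end Codes

section Obstructions

variable {V α : Type*}

/-- All adjacency patterns of a further vertex to `n` given vertices. -/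
def patterns (n : ℕ) : List (List Bool) :=
  (List.replicate n [false, true]).sections

theorem mem_patterns {n : ℕ} {p : List Bool} (hp : p.length = n) : p ∈ patterns n := by
  subst hp
  rw [patterns, List.mem_sections]
  induction p with simp [List.replicate_succ, *]

/-- The element of `D` used in extending the representation `w` to a vertex with adjacency pattern
`p` to the vertices already represented. -/
def firstCandidate (D : List α) (b : α → α → Bool) (w : List α) (p : List Bool) : Option α :=
  (candidates D b w p).head?

/-- The one-vertex extensions of the graph represented by `w` to which `w` does not extend. -/
def vertexObstructions (D : List α) (b : α → α → Bool) (w : List α) : List GraphCode :=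
  ((patterns w.length).filter fun p => (firstCandidate D b w p).isNone).map (· :: encode b w)

/-- The two-vertex extensions of the graph represented by `w` in which the adjacency of the new
vertices is not the one given by their first candidates `x` and `y`. By symmetry the pairs
with `y ≤ x` suffice. -/
def edgeObstructions [LinearOrder α] (D : List α) (b : α → α → Bool) (w : List α) :
    List GraphCode :=
  let reps := (patterns w.length).filterMap (firstCandidate D b w)
  reps.flatMap fun x => (reps.filter (· ≤ x)).map fun y =>
    ((!b y x) :: w.map (b y)) :: w.map (b x) :: encode b w

/-- The graph `K` does not occur as an induced subgraph of the graph with adjacency `a`. -/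
def Excluded (a : V → V → Bool) (K : GraphCode) : Prop :=
  ∀ l : List V, l.Nodup → encode a l ≠ K

theorem exists_map_eq_of_nodup {l : List V} {w : List α} (hl : l.Nodup)
    (hlw : l.length = w.length) {P : V → α → Prop} (hP : ∀ v ∉ l, ∃ x, P v x) :
    ∃ r : V → α, l.map r = w ∧ ∀ v ∉ l, P v (r v) := by
  have key : ∀ v, ∃ x, (∀ i, l[i]? = some v → w[i]? = some x) ∧ (v ∉ l → P v x) := fun v => by
    by_cases hv : v ∈ l
    · obtain ⟨i, hi, rfl⟩ := List.getElem_of_mem hv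
      refine ⟨w[i], fun j hj => ?_, absurd hv⟩
      obtain ⟨hj, hij⟩ := List.getElem?_eq_some_iff.mp hj
      obtain rfl := hl.getElem_inj_iff.mp hij
      exact List.getElem?_eq_getElem _
    · obtain ⟨x, hx⟩ := hP v hv
      exact ⟨x, fun i hi => absurd (List.mem_of_getElem? hi) hv, fun _ => hx⟩
  choose r hr using key
  refine ⟨r, List.ext_getElem (by simpa) fun i hi hi' => ?_, fun v => (hr v).2⟩
  have hi : i < l.length := by simpa using hi
  simpa [hi', eq_comm (a := w[i])] using (hr l[i]).1 i (List.getElem?_eq_getElem hi)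

theorem exists_firstCandidate_of_excluded {D : List α} {b : α → α → Bool} {a : V → V → Bool}
    {l : List V} {w : List α} (hl : l.Nodup) (hlw : encode a l = encode b w)
    (hvertex : ∀ K ∈ vertexObstructions D b w, Excluded a K) {v : V} (hv : v ∉ l) :
    ∃ x, firstCandidate D b w (l.map (a v)) = some x := by
  rw [← Option.ne_none_iff_exists']
  intro hnone
  refine hvertex (l.map (a v) :: encode b w) ?_ (v :: l) (List.nodup_cons.mpr ⟨hv, hl⟩)
    (by rw [encode, hlw])
  have hmem : l.map (a v) ∈ patterns w.length :=
    mem_patterns (by simpa using length_eq_of_encode_eq hlw)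
  exact List.mem_map_of_mem (List.mem_filter.mpr ⟨hmem, by simp [hnone]⟩)

theorem map_eq_of_firstCandidate_eq_some {D : List α} {b : α → α → Bool} {w : List α}
    {p : List Bool} {x : α} (h : firstCandidate D b w p = some x) : w.map (b x) = p :=
  (mem_candidates.mp (List.mem_of_head? h)).2

theorem adj_eq_of_excluded [LinearOrder α] {D : List α} {b : α → α → Bool} {a : V → V → Bool}
    {l : List V} {w : List α} (hl : l.Nodup) (hlw : encode a l = encode b w)
    (hedge : ∀ K ∈ edgeObstructions D b w, Excluded a K) {u v : V} (hu : u ∉ l) (hv : v ∉ l)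
    (huv : u ≠ v) {x y : α} (hx : firstCandidate D b w (l.map (a u)) = some x)
    (hy : firstCandidate D b w (l.map (a v)) = some y) (hyx : y ≤ x) : a v u = b y x := by
  by_contra hne
  have hreps {u x} (h : firstCandidate D b w (l.map (a u)) = some x) :
      x ∈ (patterns w.length).filterMap (firstCandidate D b w) :=
    List.mem_filterMap.mpr ⟨_, mem_patterns (by simpa using length_eq_of_encode_eq hlw), h⟩
  refine hedge (((!b y x) :: w.map (b y)) :: w.map (b x) :: encode b w) ?_ (v :: u :: l) ?_ ?_
  · exact List.mem_flatMap_of_mem (hreps hx)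
      (List.mem_map_of_mem (List.mem_filter.mpr ⟨hreps hy, by simpa⟩))
  · simp [hu, hv, hl, huv.symm]
  · rw [map_eq_of_firstCandidate_eq_some hx, map_eq_of_firstCandidate_eq_some hy, ← hlw,
      ← Bool.eq_not_of_ne hne]
    rfl

theorem exists_rep_of_excluded_obstructions [LinearOrder α] {D : List α} {b : α → α → Bool}
    {a : V → V → Bool} (ha : ∀ u v, a u v = a v u) (hb : ∀ x y, b x y = b y x) {l : List V}
    {w : List α} (hl : l.Nodup) (hlw : encode a l = encode b w)
    (hvertex : ∀ K ∈ vertexObstructions D b w, Excluded a K)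
    (hedge : ∀ K ∈ edgeObstructions D b w, Excluded a K) :
    ∃ r : V → α, IsRep a b r := by
  obtain ⟨r, rfl, hr⟩ := exists_map_eq_of_nodup hl (length_eq_of_encode_eq hlw) fun v hv =>
    exists_firstCandidate_of_excluded hl hlw hvertex hv
  have inside : ∀ u ∈ l, ∀ v ∈ l, u ≠ v → a u v = b (r u) (r v) := by
    rw [encode_map, encode_eq_encode_iff] at hlw
    have : Std.Symm fun u v => a u v = b (r u) (r v) := ⟨fun u v h => by rw [ha, hb, h]⟩
    exact fun u hu v hv => hlw.forall hu hv
  have across : ∀ u ∉ l, ∀ v ∈ l, a u v = b (r u) (r v) := fun u hu v hv => by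
    have h := map_eq_of_firstCandidate_eq_some (hr u hu)
    rw [List.map_map] at h
    exact (List.map_inj_left.mp h v hv).symm
  have outside : ∀ u ∉ l, ∀ v ∉ l, u ≠ v → r u ≤ r v → a u v = b (r u) (r v) :=
    fun u hu v hv huv => adj_eq_of_excluded hl hlw hedge hv hu huv.symm (hr v hv) (hr u hu)
  refine ⟨r, fun u v huv => ?_⟩
  by_cases hu : u ∈ l <;> by_cases hv : v ∈ l
  · exact inside u hu v hv huv
  · rw [ha, hb, across v hv u hu]
  · exact across u hu v hv
  · rcases le_total (r u) (r v) with h | h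
    · exact outside u hu v hv huv h
    · rw [ha, hb, outside v hv u hu huv.symm h]

end Obstructions

section Verification

variable {V α : Type*}

/-- `K` cannot occur in a graph that is representable on any `N` vertices and contains none of the
graphs in `done`. -/
def refuted (D : List α) (b : α → α → Bool) (N : ℕ) (done : List GraphCode) (K : GraphCode) :
    Bool :=
  ((realizations D b K).isEmpty && decide (K.length ≤ N)) || done.any K.hasCopyOf

/-- Successively excludes the graphs represented by the lists in the last argument, starting from
the excluded graphs `done`, until the graph without vertices is excluded. -/
def verify [LinearOrder α] (D : List α) (b : α → α → Bool) (N : ℕ) :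
    List GraphCode → List (List α) → Bool
  | done, [] => done.any List.isEmpty
  | done, w :: L =>
    (vertexObstructions D b w).all (refuted D b N done) &&
      (edgeObstructions D b w).all (refuted D b N done) &&
      verify D b N (encode b w :: done) L

theorem excluded_of_refuted {D : List α} {b : α → α → Bool} {N : ℕ} {a : V → V → Bool}
    (ha : ∀ u v, a u v = a v u)
    (hlocal : ∀ l : List V, l.Nodup → l.length ≤ N → realizations D b (encode a l) ≠ [])
    {done : List GraphCode} (hdone : ∀ K ∈ done, Excluded a K) {K : GraphCode}
    (hK : refuted D b N done K) : Excluded a K := by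
  rintro l hl rfl
  simp only [refuted, Bool.or_eq_true, Bool.and_eq_true, List.isEmpty_iff, decide_eq_true_eq,
    length_encode, List.any_eq_true] at hK
  rcases hK with ⟨hempty, hlen⟩ | ⟨H, hH, hcopy⟩
  · exact hlocal l hl hlen hempty
  · obtain ⟨l', hl', rfl⟩ := exists_encode_eq_of_hasCopyOf ha hl hcopy
    exact hdone _ hH l' hl' rfl

theorem exists_rep_of_verify [LinearOrder α] {D : List α} {b : α → α → Bool} {N : ℕ}
    {a : V → V → Bool} (ha : ∀ u v, a u v = a v u) (hb : ∀ x y, b x y = b y x)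
    (hlocal : ∀ l : List V, l.Nodup → l.length ≤ N → realizations D b (encode a l) ≠ [])
    {done : List GraphCode} (hdone : ∀ K ∈ done, Excluded a K) {L : List (List α)}
    (hL : verify D b N done L) : ∃ r : V → α, IsRep a b r := by
  induction L generalizing done with
  | nil =>
    have hempty : [] ∈ done := by simpa [verify] using hL
    exact absurd rfl (hdone [] hempty [] List.nodup_nil)
  | cons w L ih =>
    simp only [verify, Bool.and_eq_true, List.all_eq_true] at hL
    obtain ⟨⟨hvertex, hedge⟩, hL⟩ := hL
    by_cases hw : Excluded a (encode b w)
    · exact ih (List.forall_mem_cons.mpr ⟨hw, hdone⟩) hL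
    · simp only [Excluded, ne_eq, not_forall, not_not] at hw
      obtain ⟨l, hl, hlw⟩ := hw
      exact exists_rep_of_excluded_obstructions ha hb hl hlw
        (fun K hK => excluded_of_refuted ha hlocal hdone (hvertex K hK))
        (fun K hK => excluded_of_refuted ha hlocal hdone (hedge K hK))

end Verification

end GraphCode

/-- The vector of `F₂³` whose coordinates are the last three binary digits of `x`, the units digit
first. -/
def binaryVec (x : ℕ) (i : Fin 3) : ZMod 2 :=
  (x.testBit i).toNat

/-- The dot product of `binaryVec x` and `binaryVec y`. -/
def binaryDot (x y : ℕ) : Bool :=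
  (x &&& y).testBit 0 ^^ (x &&& y).testBit 1 ^^ (x &&& y).testBit 2

theorem binaryDot_comm (x y : ℕ) : binaryDot x y = binaryDot y x := by
  rw [binaryDot, binaryDot, Nat.land_comm]

theorem binaryDot_iff (x y : ℕ) : binaryDot x y ↔ binaryVec x ⬝ᵥ binaryVec y ≠ 0 := by
  simp only [binaryDot, dotProduct, Fin.sum_univ_three, binaryVec, Nat.testBit_and, Fin.val_zero,
    Fin.val_one, Fin.val_two]
  generalize x.testBit 0 = x₀, x.testBit 1 = x₁, x.testBit 2 = x₂,
    y.testBit 0 = y₀, y.testBit 1 = y₁, y.testBit 2 = y₂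
  decide +revert

theorem exists_binaryVec_eq (u : Fin 3 → ZMod 2) : ∃ x ∈ List.range 8, binaryVec x = u := by
  decide +revert

theorem isDotRep_binaryVec_iff {V : Type*} {G : SimpleGraph V} [DecidableRel G.Adj] {r : V → ℕ} :
    IsDotRep G (fun v => binaryVec (r v)) ↔
      GraphCode.IsRep (fun u v => decide (G.Adj u v)) binaryDot r :=
  forall₃_congr fun u v _ => by
    rw [← binaryDot_iff, Bool.eq_iff_iff (a := decide _), decide_eq_true_iff,
      iff_comm (a := G.Adj u v)]

theorem minRank_le_three_iff_exists_isRep {V : Type*} [Fintype V] {G : SimpleGraph V}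
    [DecidableRel G.Adj] :
    minRank (ZMod 2) G ≤ 3 ↔ ∃ r : V → ℕ, (∀ v, r v ∈ List.range 8) ∧
      GraphCode.IsRep (fun u v => decide (G.Adj u v)) binaryDot r := by
  simp only [minRank_le_three_iff_exists_isDotRep, ← isDotRep_binaryVec_iff]
  refine ⟨fun ⟨q, hq⟩ => ?_, fun ⟨r, _, hr⟩ => ⟨_, hr⟩⟩
  choose r hr hrq using fun v => exists_binaryVec_eq (q v)
  exact ⟨r, hr, by simpa only [hrq]⟩

/-- A chain of exclusions found by computer search. Each graph is given by a list of vectors of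
`F₂³` that represents it, in the encoding of `binaryVec`. -/
def exclusions : List (List ℕ) :=
  [[1, 1, 2, 2, 4, 4], [1, 1, 2, 2, 4, 5], [1, 1, 2, 3, 4, 7], [1, 1, 2, 3, 5, 5],
    [1, 1, 2, 3, 5, 7], [1, 1, 2, 5, 5, 6], [1, 1, 3, 3, 5, 6], [1, 2, 3, 4, 5], [1, 2, 3, 5, 6],
    [1, 2, 5, 5, 6, 6], [1, 3, 3, 6, 7], [3, 3, 5, 5, 7, 7], [1, 2, 3, 5, 7], [1, 2, 5, 5, 7],
    [1, 3, 3, 5, 5], [1, 3, 3, 5, 7], [1, 1, 2, 2, 7, 7], [1, 1, 2, 6, 6], [1, 1, 3, 3, 7, 7],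
    [1, 1, 3, 7, 7], [1, 1, 2, 2, 7], [1, 1, 3, 6], [1, 3, 3, 3, 6], [1, 3, 7], [1, 1, 2, 2],
    [1, 1], []]

set_option maxRecDepth 10000 in
theorem verify_exclusions :
    GraphCode.verify (List.range 8) binaryDot 8 [] exclusions := by
  -- The kernel evaluates the explicit list faster than `List.range`.
  rw [show List.range 8 = [0, 1, 2, 3, 4, 5, 6, 7] from rfl]
  decide +kernel

theorem minRank_le_three_of_forall_deleteVert {V : Type*} [Fintype V] [DecidableEq V]
    {G : SimpleGraph V} (hcard : 8 < Fintype.card V)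
    (hdel : ∀ v, minRank (ZMod 2) (deleteVert G v) ≤ 3) :
    minRank (ZMod 2) G ≤ 3 := by
  classical
  have hlocal (l : List V) (hl : l.Nodup) (hlen : l.length ≤ 8) :
      GraphCode.realizations (List.range 8) binaryDot
        (GraphCode.encode (fun u v => decide (G.Adj u v)) l) ≠ [] := by
    obtain ⟨v, hv⟩ : ∃ v, v ∉ l := by
      have hlt : l.toFinset.card < (Finset.univ : Finset V).card :=
        l.toFinset_card_le.trans_lt (hlen.trans_lt hcard)
      simpa using Finset.exists_mem_notMem_of_card_lt_card hlt
    obtain ⟨r, hrange, hr⟩ := minRank_le_three_iff_exists_isRep.mp (hdel v)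
    lift l to List {u // u ≠ v} using fun u hu => ne_of_mem_of_not_mem hu hv
    rw [GraphCode.encode_map]
    exact GraphCode.realizations_encode_ne_nil hrange hr (hl.of_map _)
  obtain ⟨r, hr⟩ := GraphCode.exists_rep_of_verify (fun u v => by simp [G.adj_comm])
    binaryDot_comm hlocal (by simp) verify_exclusions
  exact minRank_le_three_iff_exists_isDotRep.mpr ⟨_, isDotRep_binaryVec_iff.mpr hr⟩

/-- Every graph in `F₄(F₂)` has at most 8 vertices: if `G` is a finite simple graph with
`mr(F₂, G) ≥ 4` and `mr(F₂, G - v) ≤ 3` for every vertex `v` of `G`, then `G` has at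
most 8 vertices. -/
theorem card_le_eight_of_forbClass_four {V : Type*} [Fintype V] [DecidableEq V]
    (G : SimpleGraph V) (hG : MemForbClass (ZMod 2) 4 G) :
    Fintype.card V ≤ 8 := by
  obtain ⟨hge, hdel⟩ := hG
  by_contra! hcard
  have := minRank_le_three_of_forall_deleteVert hcard fun v => Nat.le_of_lt_succ (hdel v)
  omega
end
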